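/- arXiv:0808.1714 — 4 statements merged into one kernel-verified Lean document; each statement's English description precedes it below -/
import Mathlib

section
/- For every n, the space of trilinear forms T on ℝⁿ that are antisymmetric in the first two arguments (i.e. T(X,Y,Z) = −T(Y,X,Z)) decomposes as the internal direct sum Vec ⊕ 𝒜 ⊕ Alt of the three subspaces Vec, 𝒜, Alt defined below; moreover the kernel of the Bianchi map 𝔟 equals Vec ⊕ 𝒜 and the kernel of the trace map c equals 𝒜 ⊕ Alt. -/
/-!
Two complements are split off the torsion tensors. On `VecT` the trace map satisfies
`c(T_ν) = (n - 1) ν`, so for `n ≠ 1` it is injective there and subtracting `T_ν` with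
`ν = c(T) / (n - 1)` makes any `T` trace-free; for `n = 1` every torsion tensor vanishes.
On `AltT` the Bianchi map is multiplication by `3`, and `𝔟(T) / 3` is alternating for every
torsion tensor `T`, so subtracting it puts `T` in the Bianchi kernel. Since moreover
`VecT` lies in the kernel of `𝔟` and `AltT` in the kernel of `c`, both kernels, and then the
whole space, decompose as claimed.
-/

noncomputable section

set_option maxSynthPendingDepth 3

/-- Euclidean `n`-space `ℝⁿ`. -/
abbrev V (n : ℕ) := Fin n → ℝ

/-- Trilinear forms on `ℝⁿ`. -/
abbrev Tri (n : ℕ) := V n →ₗ[ℝ] V n →ₗ[ℝ] V n →ₗ[ℝ] ℝ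

/-- The standard inner product on `ℝⁿ`. -/
def inn {n : ℕ} (X Y : V n) : ℝ := ∑ i, X i * Y i

/-- The standard orthonormal basis of `ℝⁿ`. -/
def stdB {n : ℕ} (i : Fin n) : V n := Pi.single i 1

/-- Torsion tensors: trilinear forms antisymmetric in the first two arguments. -/
def Torsion (n : ℕ) : Submodule ℝ (Tri n) where
  carrier := {T | ∀ X Y Z, T X Y Z = - T Y X Z}
  zero_mem' := by intro X Y Z; simp
  add_mem' := by
    intro T S hT hS X Y Z
    simp only [LinearMap.add_apply]
    linear_combination hT X Y Z + hS X Y Z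
  smul_mem' := by
    intro c T hT X Y Z
    simp only [LinearMap.smul_apply, smul_eq_mul]
    linear_combination c * hT X Y Z

/-- The kernel of the Bianchi map `𝔟(T)(X,Y,Z) = T(X,Y,Z) + T(Y,Z,X) + T(Z,X,Y)`. -/
def kerBianchi (n : ℕ) : Submodule ℝ (Tri n) where
  carrier := {T | ∀ X Y Z, T X Y Z + T Y Z X + T Z X Y = 0}
  zero_mem' := by intro X Y Z; simp
  add_mem' := by
    intro T S hT hS X Y Z
    simp only [LinearMap.add_apply]
    linear_combination hT X Y Z + hS X Y Z
  smul_mem' := by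
    intro c T hT X Y Z
    simp only [LinearMap.smul_apply, smul_eq_mul]
    linear_combination c * hT X Y Z

/-- The kernel of the trace map `c(T)(X) = Σⱼ T(X,eⱼ,eⱼ)`. -/
def kerTrace (n : ℕ) : Submodule ℝ (Tri n) where
  carrier := {T | ∀ X, ∑ j, T X (stdB j) (stdB j) = 0}
  zero_mem' := by intro X; simp
  add_mem' := by
    intro T S hT hS X
    simp only [LinearMap.add_apply, Finset.sum_add_distrib]
    rw [hT X, hS X]; ring
  smul_mem' := by
    intro c T hT X
    simp only [LinearMap.smul_apply, smul_eq_mul, ← Finset.mul_sum]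
    rw [hT X, mul_zero]

/-- The vectorial component: tensors `T_ν(X,Y,Z) = ν(X)⟨Y,Z⟩ − ν(Y)⟨X,Z⟩`. -/
def VecT (n : ℕ) : Submodule ℝ (Tri n) where
  carrier := {T | ∃ ν : V n →ₗ[ℝ] ℝ, ∀ X Y Z,
      T X Y Z = ν X * inn Y Z - ν Y * inn X Z}
  zero_mem' := ⟨0, by intro X Y Z; simp⟩
  add_mem' := by
    rintro T S ⟨ν, hν⟩ ⟨ρ, hρ⟩
    refine ⟨ν + ρ, fun X Y Z => ?_⟩
    simp only [LinearMap.add_apply]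
    linear_combination hν X Y Z + hρ X Y Z
  smul_mem' := by
    rintro c T ⟨ν, hν⟩
    refine ⟨c • ν, fun X Y Z => ?_⟩
    simp only [LinearMap.smul_apply, smul_eq_mul]
    linear_combination c * hν X Y Z

/-- The totally alternating trilinear forms. -/
def AltT (n : ℕ) : Submodule ℝ (Tri n) where
  carrier := {T | (∀ X Y Z, T X Y Z = - T Y X Z) ∧ (∀ X Y Z, T X Y Z = - T X Z Y)}
  zero_mem' := ⟨by intro X Y Z; simp, by intro X Y Z; simp⟩
  add_mem' := by
    rintro T S ⟨hT1, hT2⟩ ⟨hS1, hS2⟩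
    constructor
    · intro X Y Z
      simp only [LinearMap.add_apply]
      linear_combination hT1 X Y Z + hS1 X Y Z
    · intro X Y Z
      simp only [LinearMap.add_apply]
      linear_combination hT2 X Y Z + hS2 X Y Z
  smul_mem' := by
    rintro c T ⟨hT1, hT2⟩
    constructor
    · intro X Y Z
      simp only [LinearMap.smul_apply, smul_eq_mul]
      linear_combination c * hT1 X Y Z
    · intro X Y Z
      simp only [LinearMap.smul_apply, smul_eq_mul]
      linear_combination c * hT2 X Y Z

/-- The Cartan component `𝒜 = ker 𝔟 ∩ ker c` (inside the torsion tensors). -/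
def CartanA (n : ℕ) : Submodule ℝ (Tri n) := Torsion n ⊓ kerBianchi n ⊓ kerTrace n

lemma VecT_le_Torsion (n : ℕ) : VecT n ≤ Torsion n := by
  rintro T ⟨ν, h⟩ X Y Z
  rw [h, h]; ring

lemma inn_comm' {n : ℕ} (X Y : V n) : inn X Y = inn Y X := by
  simp only [inn, mul_comm]

lemma VecT_le_kerBianchi (n : ℕ) : VecT n ≤ kerBianchi n := by
  rintro T ⟨ν, h⟩ X Y Z
  rw [h, h, h, inn_comm' Z X, inn_comm' Z Y, inn_comm' Y X]; ring

lemma AltT_le_Torsion (n : ℕ) : AltT n ≤ Torsion n := fun _ h => h.1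

lemma AltT_le_kerTrace (n : ℕ) : AltT n ≤ kerTrace n := by
  rintro T ⟨-, h⟩ X
  exact Finset.sum_eq_zero fun j _ => by linarith [h X (stdB j) (stdB j)]

lemma AltT_inf_kerBianchi {n : ℕ} {T : Tri n} (h : T ∈ AltT n) (hb : T ∈ kerBianchi n) :
    T = 0 := by
  refine LinearMap.ext fun X => LinearMap.ext fun Y => LinearMap.ext fun Z => ?_
  have := hb X Y Z
  simp only [LinearMap.zero_apply]
  linarith [h.2 Y Z X, h.1 Y X Z, h.1 Z X Y, h.2 X Z Y]

/-- In dimension one the first two arguments are proportional, so antisymmetry kills `T`. -/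
lemma Torsion_one {T : Tri 1} (h : T ∈ Torsion 1) : T = 0 := by
  refine LinearMap.ext fun X => LinearMap.ext fun Y => LinearMap.ext fun Z => ?_
  have key : ∀ W : V 1, W = W 0 • stdB 0 := by
    intro W; ext i; fin_cases i; simp [stdB]
  have h0 : T (stdB 0) (stdB 0) Z = 0 := by linarith [h (stdB 0) (stdB 0) Z]
  rw [key X, key Y]
  simp [h0]

lemma inn_stdB_self {n : ℕ} (j : Fin n) : inn (stdB j) (stdB j) = 1 := by
  simp [inn, stdB, Pi.single_apply]

lemma sum_inn_stdB {n : ℕ} (ν : V n →ₗ[ℝ] ℝ) (X : V n) :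
    ∑ j, ν (stdB j) * inn X (stdB j) = ν X := by
  have h : X = ∑ j, X j • (stdB j : V n) := by
    ext i; simp [stdB, Pi.single_apply]
  conv_rhs => rw [h]
  simp [inn, stdB, Pi.single_apply, mul_comm]

lemma trace_vec {n : ℕ} {T : Tri n} (ν : V n →ₗ[ℝ] ℝ)
    (h : ∀ X Y Z, T X Y Z = ν X * inn Y Z - ν Y * inn X Z) (X : V n) :
    ∑ j, T X (stdB j) (stdB j) = ((n : ℝ) - 1) * ν X := by
  simp only [h, Finset.sum_sub_distrib, sum_inn_stdB, inn_stdB_self]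
  simp; ring

lemma VecT_inf_kerTrace {n : ℕ} {T : Tri n} (h : T ∈ VecT n) (hc : T ∈ kerTrace n) :
    T = 0 := by
  by_cases hn : n = 1
  · subst hn
    exact Torsion_one (VecT_le_Torsion 1 h)
  obtain ⟨ν, h⟩ := h
  have hn' : (n : ℝ) - 1 ≠ 0 := sub_ne_zero.2 (by exact_mod_cast hn)
  have hν : ∀ X, ν X = 0 := fun X =>
    (mul_eq_zero.1 ((trace_vec ν h X).symm.trans (hc X))).resolve_left hn'
  refine LinearMap.ext fun X => LinearMap.ext fun Y => LinearMap.ext fun Z => ?_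
  simp [h, hν]

/-- The standard inner product as a bilinear map. -/
def innL (n : ℕ) : V n →ₗ[ℝ] V n →ₗ[ℝ] ℝ :=
  LinearMap.mk₂ ℝ inn
    (fun X Y Z => by simp [inn, add_mul, Finset.sum_add_distrib])
    (fun c X Y => by simp [inn, Finset.mul_sum, mul_assoc])
    (fun X Y Z => by simp [inn, mul_add, Finset.sum_add_distrib])
    (fun c X Y => by simp [inn, Finset.mul_sum, mul_left_comm])

/-- The tensor `T_ν`. -/
def vecOf {n : ℕ} (ν : V n →ₗ[ℝ] ℝ) : Tri n :=
  ν.smulRight (innL n) - (ν.smulRight (innL n)).flip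

lemma vecOf_apply {n : ℕ} (ν : V n →ₗ[ℝ] ℝ) (X Y Z : V n) :
    vecOf ν X Y Z = ν X * inn Y Z - ν Y * inn X Z := by
  simp [vecOf, innL]
  rfl

/-- The trace `c(T)` as a linear functional. -/
def traceL {n : ℕ} (T : Tri n) : V n →ₗ[ℝ] ℝ :=
  ∑ j, (T.flip (stdB j)).flip (stdB j)

lemma traceL_apply {n : ℕ} (T : Tri n) (X : V n) :
    traceL T X = ∑ j, T X (stdB j) (stdB j) := by
  simp [traceL]

lemma exists_sub_mem_kerTrace {n : ℕ} {T : Tri n} (h : T ∈ Torsion n) :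
    ∃ v ∈ VecT n, T - v ∈ kerTrace n := by
  by_cases hn : n = 1
  · subst hn
    exact ⟨0, zero_mem _, by rw [Torsion_one h, sub_zero]; exact zero_mem _⟩
  have hn' : (n : ℝ) - 1 ≠ 0 := sub_ne_zero.2 (by exact_mod_cast hn)
  refine ⟨vecOf (((n : ℝ) - 1)⁻¹ • traceL T), ⟨_, vecOf_apply _⟩, fun X => ?_⟩
  simp only [LinearMap.sub_apply, Finset.sum_sub_distrib]
  rw [trace_vec _ (vecOf_apply _), LinearMap.smul_apply, traceL_apply, smul_eq_mul,
    mul_inv_cancel_left₀ hn', sub_self]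

/-- The tensor `T(X, Z, Y)`. -/
def swapLast {n : ℕ} (T : Tri n) : Tri n where
  toFun X := (T X).flip
  map_add' X Y := by ext; simp
  map_smul' c X := by ext; simp

/-- One third of the Bianchi map. -/
def altOf {n : ℕ} (T : Tri n) : Tri n :=
  (3⁻¹ : ℝ) • (T + (swapLast T).flip + swapLast T.flip)

lemma altOf_apply {n : ℕ} (T : Tri n) (X Y Z : V n) :
    altOf T X Y Z = 3⁻¹ * (T X Y Z + T Y Z X + T Z X Y) := by
  simp [altOf, swapLast]
  ring

lemma exists_sub_mem_kerBianchi {n : ℕ} {T : Tri n} (h : T ∈ Torsion n) :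
    ∃ a ∈ AltT n, T - a ∈ kerBianchi n := by
  refine ⟨altOf T, ⟨fun X Y Z => ?_, fun X Y Z => ?_⟩, fun X Y Z => ?_⟩
  · rw [altOf_apply, altOf_apply, h X Y Z, h Y Z X, h Z X Y]; ring
  · rw [altOf_apply, altOf_apply, h X Y Z, h Y Z X, h Z X Y]; ring
  · simp only [LinearMap.sub_apply, altOf_apply]; ring

lemma kerBianchi_eq (n : ℕ) : Torsion n ⊓ kerBianchi n = VecT n ⊔ CartanA n := by
  apply le_antisymm
  · rintro T ⟨ht, hb⟩
    obtain ⟨v, hv, hc⟩ := exists_sub_mem_kerTrace ht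
    exact Submodule.mem_sup.2 ⟨v, hv, T - v,
      ⟨⟨sub_mem ht (VecT_le_Torsion n hv), sub_mem hb (VecT_le_kerBianchi n hv)⟩, hc⟩, by abel⟩
  · exact sup_le (le_inf (VecT_le_Torsion n) (VecT_le_kerBianchi n)) inf_le_left

lemma kerTrace_eq (n : ℕ) : Torsion n ⊓ kerTrace n = CartanA n ⊔ AltT n := by
  apply le_antisymm
  · rintro T ⟨ht, hc⟩
    obtain ⟨a, ha, hb⟩ := exists_sub_mem_kerBianchi ht
    exact Submodule.mem_sup.2 ⟨T - a,
      ⟨⟨sub_mem ht (AltT_le_Torsion n ha), hb⟩, sub_mem hc (AltT_le_kerTrace n ha)⟩,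
      a, ha, by abel⟩
  · exact sup_le (le_inf (fun _ h => h.1.1) inf_le_right)
      (le_inf (AltT_le_Torsion n) (AltT_le_kerTrace n))

/-- for every `n`, the space of torsion tensors on `ℝⁿ` is the internal
direct sum `Vec ⊕ 𝒜 ⊕ Alt`; moreover the kernel of the Bianchi map equals `Vec ⊕ 𝒜`
and the kernel of the trace map equals `𝒜 ⊕ Alt`. -/
theorem cartan_decomposition (n : ℕ) :
    (VecT n ⊔ CartanA n ⊔ AltT n = Torsion n) ∧
    (VecT n ⊓ (CartanA n ⊔ AltT n) = ⊥) ∧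
    (CartanA n ⊓ (VecT n ⊔ AltT n) = ⊥) ∧
    (AltT n ⊓ (VecT n ⊔ CartanA n) = ⊥) ∧
    (Torsion n ⊓ kerBianchi n = VecT n ⊔ CartanA n) ∧
    (Torsion n ⊓ kerTrace n = CartanA n ⊔ AltT n) := by
  refine ⟨?_, ?_, ?_, ?_, kerBianchi_eq n, kerTrace_eq n⟩
  · rw [← kerBianchi_eq]
    refine le_antisymm (sup_le inf_le_left (AltT_le_Torsion n)) fun T ht => ?_
    obtain ⟨a, ha, hb⟩ := exists_sub_mem_kerBianchi ht
    exact Submodule.mem_sup.2 ⟨T - a, ⟨sub_mem ht (AltT_le_Torsion n ha), hb⟩, a, ha, by abel⟩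
  · rw [← kerTrace_eq, Submodule.eq_bot_iff]
    exact fun T h => VecT_inf_kerTrace h.1 h.2.2
  · rw [Submodule.eq_bot_iff]
    rintro T ⟨⟨⟨-, hb⟩, hc⟩, h⟩
    obtain ⟨v, hv, a, ha, rfl⟩ := Submodule.mem_sup.1 h
    -- `𝔟` kills `v + a` and `v`, hence `a`; then `v` is trace-free.
    have ha0 : a = 0 := AltT_inf_kerBianchi ha
      (((kerBianchi n).add_mem_iff_right (VecT_le_kerBianchi n hv)).1 hb)
    subst ha0
    rw [add_zero] at hc ⊢
    exact VecT_inf_kerTrace hv hc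
  · rw [← kerBianchi_eq, Submodule.eq_bot_iff]
    exact fun T h => AltT_inf_kerBianchi h.1 h.2.2
end
end

section
/- In dimension 4, the subspaces 𝒜₊ and 𝒜₋ of the Cartan component 𝒜 each have dimension 8, and 𝒜 is the internal direct sum 𝒜₊ ⊕ 𝒜₋. -/
/-!
The decomposition rests on the fact that selfdual `2`-forms and anti-selfdual `2`-forms are
complementary in `Λ²`, plus one coordinate identity. A tensor with selfdual first pair has the form
`T = sd₁ ⊗ φ₁ + sd₂ ⊗ φ₂ + sd₃ ⊗ φ₃` with covectors `φᵢ`, and both `𝔟(T) = 0` and `c(T) = 0` are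
equivalent to the single vector equation `J₁φ₁ + J₂φ₂ + J₃φ₃ = 0`, the `Jᵢ` being the complex
structures attached to `sdᵢ`. This determines `φ₁` from `φ₂, φ₃`, so `(φ₂, φ₃) ↦ T` is an injective
parametrisation `sdParam` of `𝒜₊` by `ℝ⁴ × ℝ⁴`.

For an arbitrary `T ∈ 𝒜` the trace and Bianchi equations together force the covectors of its
selfdual part to satisfy the same equation (`sdCovector_eq`), so the selfdual part is in the range
of `sdParam`, while the remainder is in `𝒜` and anti-selfdual. This gives `𝒜 = 𝒜₊ + 𝒜₋`, and,
as `𝒜₊ ∩ 𝒜₋ = 0`, also that `sdParam` is onto `𝒜₊`; hence `dim 𝒜₊ = 8`. The reflection `e₀ ↦ -e₀`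
preserves `𝒜` and exchanges `𝒜₊` and `𝒜₋`, so `dim 𝒜₋ = 8` too.
-/

noncomputable section

set_option maxSynthPendingDepth 3

/-! ### Selfdual and anti-selfdual 2-forms on `ℝ⁴` -/

/-- The selfdual 2-form `e⁰∧e¹ + e²∧e³`. -/
def sd₁ (X Y : V 4) : ℝ := (X 0 * Y 1 - X 1 * Y 0) + (X 2 * Y 3 - X 3 * Y 2)

/-- The selfdual 2-form `e⁰∧e² + e³∧e¹`. -/
def sd₂ (X Y : V 4) : ℝ := (X 0 * Y 2 - X 2 * Y 0) + (X 3 * Y 1 - X 1 * Y 3)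

/-- The selfdual 2-form `e⁰∧e³ + e¹∧e²`. -/
def sd₃ (X Y : V 4) : ℝ := (X 0 * Y 3 - X 3 * Y 0) + (X 1 * Y 2 - X 2 * Y 1)

/-- The anti-selfdual 2-form `e⁰∧e¹ − e²∧e³`. -/
def asd₁ (X Y : V 4) : ℝ := (X 0 * Y 1 - X 1 * Y 0) - (X 2 * Y 3 - X 3 * Y 2)

/-- The anti-selfdual 2-form `e⁰∧e² − e³∧e¹`. -/
def asd₂ (X Y : V 4) : ℝ := (X 0 * Y 2 - X 2 * Y 0) - (X 3 * Y 1 - X 1 * Y 3)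

/-- The anti-selfdual 2-form `e⁰∧e³ − e¹∧e²`. -/
def asd₃ (X Y : V 4) : ℝ := (X 0 * Y 3 - X 3 * Y 0) - (X 1 * Y 2 - X 2 * Y 1)

/-- `𝒜₊`: members of `𝒜` such that for every `Z` the 2-form `(X,Y) ↦ T(X,Y,Z)` is
a combination of the selfdual forms. -/
def Aplus : Submodule ℝ (Tri 4) where
  carrier := {T | T ∈ CartanA 4 ∧ ∀ Z, ∃ a b c : ℝ, ∀ X Y,
      T X Y Z = a * sd₁ X Y + b * sd₂ X Y + c * sd₃ X Y}
  zero_mem' := ⟨(CartanA 4).zero_mem, fun Z => ⟨0, 0, 0, by intro X Y; simp⟩⟩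
  add_mem' := by
    rintro T S ⟨hT, hT'⟩ ⟨hS, hS'⟩
    refine ⟨(CartanA 4).add_mem hT hS, fun Z => ?_⟩
    obtain ⟨a, b, c, h⟩ := hT' Z
    obtain ⟨a', b', c', h'⟩ := hS' Z
    refine ⟨a + a', b + b', c + c', fun X Y => ?_⟩
    simp only [LinearMap.add_apply]
    linear_combination h X Y + h' X Y
  smul_mem' := by
    rintro r T ⟨hT, hT'⟩
    refine ⟨(CartanA 4).smul_mem r hT, fun Z => ?_⟩
    obtain ⟨a, b, c, h⟩ := hT' Z
    refine ⟨r * a, r * b, r * c, fun X Y => ?_⟩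
    simp only [LinearMap.smul_apply, smul_eq_mul]
    linear_combination r * h X Y

/-- `𝒜₋`: members of `𝒜` such that for every `Z` the 2-form `(X,Y) ↦ T(X,Y,Z)` is
a combination of the anti-selfdual forms. -/
def Aminus : Submodule ℝ (Tri 4) where
  carrier := {T | T ∈ CartanA 4 ∧ ∀ Z, ∃ a b c : ℝ, ∀ X Y,
      T X Y Z = a * asd₁ X Y + b * asd₂ X Y + c * asd₃ X Y}
  zero_mem' := ⟨(CartanA 4).zero_mem, fun Z => ⟨0, 0, 0, by intro X Y; simp⟩⟩
  add_mem' := by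
    rintro T S ⟨hT, hT'⟩ ⟨hS, hS'⟩
    refine ⟨(CartanA 4).add_mem hT hS, fun Z => ?_⟩
    obtain ⟨a, b, c, h⟩ := hT' Z
    obtain ⟨a', b', c', h'⟩ := hS' Z
    refine ⟨a + a', b + b', c + c', fun X Y => ?_⟩
    simp only [LinearMap.add_apply]
    linear_combination h X Y + h' X Y
  smul_mem' := by
    rintro r T ⟨hT, hT'⟩
    refine ⟨(CartanA 4).smul_mem r hT, fun Z => ?_⟩
    obtain ⟨a, b, c, h⟩ := hT' Z
    refine ⟨r * a, r * b, r * c, fun X Y => ?_⟩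
    simp only [LinearMap.smul_apply, smul_eq_mul]
    linear_combination r * h X Y

lemma mem_CartanA_iff {n : ℕ} {T : Tri n} : T ∈ CartanA n ↔
    (∀ X Y Z, T X Y Z = - T Y X Z) ∧ (∀ X Y Z, T X Y Z + T Y Z X + T Z X Y = 0) ∧
      ∀ X, ∑ j, T X (stdB j) (stdB j) = 0 := by
  unfold CartanA
  rw [Submodule.mem_inf, Submodule.mem_inf, and_assoc]
  rfl

lemma eq_sum_stdB (X : V 4) :
    X = X 0 • stdB 0 + X 1 • stdB 1 + X 2 • stdB 2 + X 3 • stdB 3 := by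
  ext i
  fin_cases i <;> simp [stdB]

lemma linearMap_expand {M : Type*} [AddCommGroup M] [Module ℝ M] (f : V 4 →ₗ[ℝ] M) (X : V 4) :
    f X = X 0 • f (stdB 0) + X 1 • f (stdB 1) + X 2 • f (stdB 2) + X 3 • f (stdB 3) := by
  conv_lhs => rw [eq_sum_stdB X]
  simp only [map_add, map_smul]

/-- For a torsion tensor the `2`-form `T(·,·,Z)` is determined by its six components. -/
lemma torsion_expand {T : Tri 4} (hT : ∀ X Y Z, T X Y Z = - T Y X Z) (X Y Z : V 4) :
    T X Y Z = T (stdB 0) (stdB 1) Z * (X 0 * Y 1 - X 1 * Y 0)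
      + T (stdB 2) (stdB 3) Z * (X 2 * Y 3 - X 3 * Y 2)
      + T (stdB 0) (stdB 2) Z * (X 0 * Y 2 - X 2 * Y 0)
      + T (stdB 3) (stdB 1) Z * (X 3 * Y 1 - X 1 * Y 3)
      + T (stdB 0) (stdB 3) Z * (X 0 * Y 3 - X 3 * Y 0)
      + T (stdB 1) (stdB 2) Z * (X 1 * Y 2 - X 2 * Y 1) := by
  have hdiag : ∀ W, T W W Z = 0 := fun W => by linarith [hT W W Z]
  rw [linearMap_expand T X]
  simp only [LinearMap.add_apply, LinearMap.smul_apply]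
  rw [linearMap_expand (T (stdB 0)) Y, linearMap_expand (T (stdB 1)) Y,
    linearMap_expand (T (stdB 2)) Y, linearMap_expand (T (stdB 3)) Y]
  simp only [LinearMap.add_apply, LinearMap.smul_apply, smul_eq_mul, hdiag]
  rw [hT (stdB 1) (stdB 0), hT (stdB 2) (stdB 0), hT (stdB 3) (stdB 0), hT (stdB 2) (stdB 1),
    hT (stdB 3) (stdB 2), hT (stdB 1) (stdB 3)]
  ring

/-- The covector `φ₁` that the equation `J₁φ₁ + J₂φ₂ + J₃φ₃ = 0` determines from `φ₂ = p.1` and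
`φ₃ = p.2`, evaluated at `Z`. -/
def sdCovector (p : V 4 × V 4) (Z : V 4) : ℝ :=
  (p.2 2 - p.1 3) * Z 0 + (- p.1 2 - p.2 3) * Z 1 + (p.1 1 - p.2 0) * Z 2 + (p.1 0 + p.2 1) * Z 3

/-- The tensor `sd₁ ⊗ φ₁ + sd₂ ⊗ φ₂ + sd₃ ⊗ φ₃`, where `(φ₂, φ₃)` is the given pair and
`φ₁ = sdCovector (φ₂, φ₃)`. -/
def sdParam : (V 4 × V 4) →ₗ[ℝ] Tri 4 where
  toFun p := LinearMap.mk₂ ℝ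
    (fun X Y =>
      { toFun := fun Z => sdCovector p Z * sd₁ X Y + inn p.1 Z * sd₂ X Y + inn p.2 Z * sd₃ X Y
        map_add' := by
          intro Z W; simp only [sdCovector, inn, Fin.sum_univ_four, Pi.add_apply]; ring
        map_smul' := by
          intro r Z
          simp only [sdCovector, inn, Fin.sum_univ_four, Pi.smul_apply, smul_eq_mul,
            RingHom.id_apply]
          ring })
    (by intro X X' Y; refine LinearMap.ext fun Z => ?_; simp [sd₁, sd₂, sd₃]; ring)
    (by intro r X Y; refine LinearMap.ext fun Z => ?_; simp [sd₁, sd₂, sd₃]; ring)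
    (by intro X Y Y'; refine LinearMap.ext fun Z => ?_; simp [sd₁, sd₂, sd₃]; ring)
    (by intro r X Y; refine LinearMap.ext fun Z => ?_; simp [sd₁, sd₂, sd₃]; ring)
  map_add' := by
    intro p q
    refine LinearMap.ext fun X => LinearMap.ext fun Y => LinearMap.ext fun Z => ?_
    simp only [LinearMap.add_apply, LinearMap.mk₂_apply, LinearMap.coe_mk, AddHom.coe_mk,
      sdCovector, inn, Fin.sum_univ_four, Pi.add_apply, Prod.fst_add, Prod.snd_add]
    ring
  map_smul' := by
    intro r p
    refine LinearMap.ext fun X => LinearMap.ext fun Y => LinearMap.ext fun Z => ?_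
    simp only [LinearMap.smul_apply, LinearMap.mk₂_apply, LinearMap.coe_mk, AddHom.coe_mk,
      sdCovector, inn, Fin.sum_univ_four, Pi.smul_apply, Prod.smul_fst, Prod.smul_snd,
      smul_eq_mul, RingHom.id_apply]
    ring

lemma sdParam_apply (p : V 4 × V 4) (X Y Z : V 4) :
    sdParam p X Y Z = sdCovector p Z * sd₁ X Y + inn p.1 Z * sd₂ X Y + inn p.2 Z * sd₃ X Y :=
  rfl

lemma sdParam_mem (p : V 4 × V 4) : sdParam p ∈ Aplus := by
  refine ⟨mem_CartanA_iff.2 ⟨?_, ?_, ?_⟩, fun Z => ⟨_, _, _, fun X Y => sdParam_apply p X Y Z⟩⟩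
  · intro X Y Z
    simp only [sdParam_apply, sd₁, sd₂, sd₃]
    ring
  · intro X Y Z
    simp only [sdParam_apply, sd₁, sd₂, sd₃, sdCovector, inn, Fin.sum_univ_four]
    ring
  · intro X
    simp [sdParam_apply, sd₁, sd₂, sd₃, sdCovector, inn, Fin.sum_univ_four, stdB]
    ring

lemma sdParam_injective : Function.Injective sdParam := by
  rw [← LinearMap.ker_eq_bot, LinearMap.ker_eq_bot']
  intro p hp
  -- Evaluating on `(e₀, e₂)` and `(e₀, e₃)` isolates the coefficients of `sd₂` and `sd₃`.
  refine Prod.ext (funext fun k => ?_) (funext fun k => ?_)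
  · have h : sdParam p (stdB 0) (stdB 2) (stdB k) = 0 := by rw [hp]; rfl
    simpa [sdParam_apply, sd₁, sd₂, sd₃, inn, stdB, Pi.single_apply] using h
  · have h : sdParam p (stdB 0) (stdB 3) (stdB k) = 0 := by rw [hp]; rfl
    simpa [sdParam_apply, sd₁, sd₂, sd₃, inn, stdB, Pi.single_apply] using h

/-- The `sd₂`- and `sd₃`-covectors of the selfdual part of `T`. -/
def sdPart (T : Tri 4) : V 4 × V 4 :=
  (fun k => (T (stdB 0) (stdB 2) (stdB k) + T (stdB 3) (stdB 1) (stdB k)) / 2,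
    fun k => (T (stdB 0) (stdB 3) (stdB k) + T (stdB 1) (stdB 2) (stdB k)) / 2)

lemma inn_sdPart_fst (T : Tri 4) (Z : V 4) :
    inn (sdPart T).1 Z = (T (stdB 0) (stdB 2) Z + T (stdB 3) (stdB 1) Z) / 2 := by
  rw [linearMap_expand (T (stdB 0) (stdB 2)) Z, linearMap_expand (T (stdB 3) (stdB 1)) Z]
  simp only [inn, sdPart, Fin.sum_univ_four, smul_eq_mul]
  ring

lemma inn_sdPart_snd (T : Tri 4) (Z : V 4) :
    inn (sdPart T).2 Z = (T (stdB 0) (stdB 3) Z + T (stdB 1) (stdB 2) Z) / 2 := by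
  rw [linearMap_expand (T (stdB 0) (stdB 3)) Z, linearMap_expand (T (stdB 1) (stdB 2)) Z]
  simp only [inn, sdPart, Fin.sum_univ_four, smul_eq_mul]
  ring

/-- For `T ∈ 𝒜` the `sd₁`-covector of the selfdual part is the one determined by the other two:
each of its components combines one trace equation with one Bianchi equation. -/
lemma sdCovector_eq {T : Tri 4} (hT : T ∈ CartanA 4) (Z : V 4) :
    sdCovector (sdPart T) Z = (T (stdB 0) (stdB 1) Z + T (stdB 2) (stdB 3) Z) / 2 := by
  obtain ⟨ha, hb, hc⟩ := mem_CartanA_iff.1 hT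
  have hdiag : ∀ W Z, T W W Z = 0 := fun W Z => by linarith [ha W W Z]
  simp only [Fin.sum_univ_four] at hc
  have t0 := hc (stdB 0)
  have t1 := hc (stdB 1)
  have t2 := hc (stdB 2)
  have t3 := hc (stdB 3)
  simp only [hdiag] at t0 t1 t2 t3
  have b0 := hb (stdB 1) (stdB 2) (stdB 3)
  have b1 := hb (stdB 0) (stdB 2) (stdB 3)
  have b2 := hb (stdB 0) (stdB 1) (stdB 3)
  have b3 := hb (stdB 0) (stdB 1) (stdB 2)
  have s10 := ha (stdB 1) (stdB 0)
  have s20 := ha (stdB 2) (stdB 0)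
  have s30 := ha (stdB 3) (stdB 0)
  have s21 := ha (stdB 2) (stdB 1)
  have s32 := ha (stdB 3) (stdB 2)
  have s13 := ha (stdB 1) (stdB 3)
  simp only [s10, s20, s30, s21, s32, s13] at t0 t1 t2 t3 b0 b1 b2 b3
  rw [linearMap_expand (T (stdB 0) (stdB 1)) Z, linearMap_expand (T (stdB 2) (stdB 3)) Z]
  simp only [sdCovector, sdPart, smul_eq_mul]
  linear_combination (Z 0 / 2) * (t1 - b1) + (Z 1 / 2) * (-t0 - b0) + (Z 2 / 2) * (t3 - b3) +
    (Z 3 / 2) * (-t2 - b2)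

lemma sub_sdParam_mem {T : Tri 4} (hT : T ∈ CartanA 4) : T - sdParam (sdPart T) ∈ Aminus := by
  refine ⟨(CartanA 4).sub_mem hT (sdParam_mem _).1, fun Z =>
    ⟨(T (stdB 0) (stdB 1) Z - T (stdB 2) (stdB 3) Z) / 2,
      (T (stdB 0) (stdB 2) Z - T (stdB 3) (stdB 1) Z) / 2,
      (T (stdB 0) (stdB 3) Z - T (stdB 1) (stdB 2) Z) / 2, fun X Y => ?_⟩⟩
  simp only [LinearMap.sub_apply]
  rw [sdParam_apply, sdCovector_eq hT, inn_sdPart_fst, inn_sdPart_snd,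
    torsion_expand (mem_CartanA_iff.1 hT).1 X Y Z]
  simp only [sd₁, sd₂, sd₃, asd₁, asd₂, asd₃]
  ring

lemma Aplus_inf_Aminus : Aplus ⊓ Aminus = ⊥ := by
  rw [eq_bot_iff]
  rintro T ⟨⟨-, hp⟩, ⟨-, hm⟩⟩
  rw [Submodule.mem_bot]
  refine LinearMap.ext fun X => LinearMap.ext fun Y => LinearMap.ext fun Z => ?_
  obtain ⟨a, b, c, h⟩ := hp Z
  obtain ⟨a', b', c', h'⟩ := hm Z
  have h01 := (h (stdB 0) (stdB 1)).symm.trans (h' _ _)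
  have h23 := (h (stdB 2) (stdB 3)).symm.trans (h' _ _)
  have h02 := (h (stdB 0) (stdB 2)).symm.trans (h' _ _)
  have h31 := (h (stdB 3) (stdB 1)).symm.trans (h' _ _)
  have h03 := (h (stdB 0) (stdB 3)).symm.trans (h' _ _)
  have h12 := (h (stdB 1) (stdB 2)).symm.trans (h' _ _)
  simp [sd₁, sd₂, sd₃, asd₁, asd₂, asd₃, stdB] at h01 h23 h02 h31 h03 h12
  have ha : a = 0 := by linarith
  have hb : b = 0 := by linarith
  have hc : c = 0 := by linarith
  rw [h, ha, hb, hc]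
  simp

lemma range_sdParam : LinearMap.range sdParam = Aplus := by
  apply le_antisymm
  · rintro _ ⟨p, rfl⟩
    exact sdParam_mem p
  · intro T hT
    have h : T - sdParam (sdPart T) ∈ Aplus ⊓ Aminus :=
      ⟨Aplus.sub_mem hT (sdParam_mem _), sub_sdParam_mem hT.1⟩
    rw [Aplus_inf_Aminus, Submodule.mem_bot, sub_eq_zero] at h
    exact ⟨_, h.symm⟩

lemma finrank_Aplus : Module.finrank ℝ ↥Aplus = 8 := by
  rw [← range_sdParam, LinearMap.finrank_range_of_inj sdParam_injective]
  simp

/-- The reflection `e₀ ↦ -e₀` of `ℝ⁴`. -/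
def refl₀ : V 4 →ₗ[ℝ] V 4 where
  toFun X := ![- X 0, X 1, X 2, X 3]
  map_add' X Y := by ext i; fin_cases i <;> simp; ring
  map_smul' r X := by ext i; fin_cases i <;> simp

lemma refl₀_apply (X : V 4) : refl₀ X = ![- X 0, X 1, X 2, X 3] := rfl

lemma refl₀_refl₀ (X : V 4) : refl₀ (refl₀ X) = X := by
  ext i; fin_cases i <;> simp [refl₀_apply]

/-- Pullback of trilinear forms along the reflection `refl₀`. -/
def pull₀ : Tri 4 →ₗ[ℝ] Tri 4 where
  toFun T := LinearMap.mk₂ ℝ (fun X Y => T (refl₀ X) (refl₀ Y) ∘ₗ refl₀)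
    (by intro X X' Y; refine LinearMap.ext fun Z => ?_; simp)
    (by intro r X Y; refine LinearMap.ext fun Z => ?_; simp)
    (by intro X Y Y'; refine LinearMap.ext fun Z => ?_; simp)
    (by intro r X Y; refine LinearMap.ext fun Z => ?_; simp)
  map_add' _ _ := rfl
  map_smul' _ _ := rfl

lemma pull₀_apply (T : Tri 4) (X Y Z : V 4) :
    pull₀ T X Y Z = T (refl₀ X) (refl₀ Y) (refl₀ Z) := rfl

lemma pull₀_pull₀ (T : Tri 4) : pull₀ (pull₀ T) = T := by
  refine LinearMap.ext fun X => LinearMap.ext fun Y => LinearMap.ext fun Z => ?_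
  simp only [pull₀_apply, refl₀_refl₀]

lemma pull₀_mem_CartanA {T : Tri 4} (hT : T ∈ CartanA 4) : pull₀ T ∈ CartanA 4 := by
  obtain ⟨ha, hb, hc⟩ := mem_CartanA_iff.1 hT
  refine mem_CartanA_iff.2 ⟨fun X Y Z => ha _ _ _, fun X Y Z => hb _ _ _, fun X => ?_⟩
  have r0 : refl₀ (stdB 0) = - stdB 0 := by ext i; fin_cases i <;> simp [refl₀_apply, stdB]
  have r1 : refl₀ (stdB 1) = stdB 1 := by ext i; fin_cases i <;> simp [refl₀_apply, stdB]
  have r2 : refl₀ (stdB 2) = stdB 2 := by ext i; fin_cases i <;> simp [refl₀_apply, stdB]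
  have r3 : refl₀ (stdB 3) = stdB 3 := by ext i; fin_cases i <;> simp [refl₀_apply, stdB]
  rw [← hc (refl₀ X)]
  simp only [pull₀_apply, Fin.sum_univ_four, r0, r1, r2, r3, map_neg, LinearMap.neg_apply, neg_neg]

lemma pull₀_mem_Aminus {T : Tri 4} (hT : T ∈ Aplus) : pull₀ T ∈ Aminus := by
  refine ⟨pull₀_mem_CartanA hT.1, fun Z => ?_⟩
  obtain ⟨a, b, c, h⟩ := hT.2 (refl₀ Z)
  refine ⟨-a, -b, -c, fun X Y => ?_⟩
  rw [pull₀_apply, h]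
  simp [sd₁, sd₂, sd₃, asd₁, asd₂, asd₃, refl₀_apply]
  ring

lemma pull₀_mem_Aplus {T : Tri 4} (hT : T ∈ Aminus) : pull₀ T ∈ Aplus := by
  refine ⟨pull₀_mem_CartanA hT.1, fun Z => ?_⟩
  obtain ⟨a, b, c, h⟩ := hT.2 (refl₀ Z)
  refine ⟨-a, -b, -c, fun X Y => ?_⟩
  rw [pull₀_apply, h]
  simp [sd₁, sd₂, sd₃, asd₁, asd₂, asd₃, refl₀_apply]
  ring

lemma map_pull₀_Aplus : Aplus.map pull₀ = Aminus := by
  apply le_antisymm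
  · rintro _ ⟨T, hT, rfl⟩
    exact pull₀_mem_Aminus hT
  · exact fun T hT => ⟨pull₀ T, pull₀_mem_Aplus hT, pull₀_pull₀ T⟩

lemma finrank_Aminus : Module.finrank ℝ ↥Aminus = 8 := by
  have hinj : Function.Injective pull₀ := Function.LeftInverse.injective pull₀_pull₀
  rw [← map_pull₀_Aplus, ← finrank_Aplus]
  exact (Submodule.equivMapOfInjective pull₀ hinj Aplus).finrank_eq.symm

/-- in dimension 4, `𝒜₊` and `𝒜₋` each have dimension 8 and
`𝒜 = 𝒜₊ ⊕ 𝒜₋` as an internal direct sum. -/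
theorem cartanA_selfdual_decomposition :
    Module.finrank ℝ ↥Aplus = 8 ∧
    Module.finrank ℝ ↥Aminus = 8 ∧
    Aplus ⊔ Aminus = CartanA 4 ∧
    Aplus ⊓ Aminus = ⊥ := by
  refine ⟨finrank_Aplus, finrank_Aminus, le_antisymm ?_ ?_, Aplus_inf_Aminus⟩
  · exact sup_le (fun T hT => hT.1) (fun T hT => hT.1)
  · intro T hT
    rw [← add_sub_cancel (sdParam (sdPart T)) T]
    exact Submodule.add_mem_sup (sdParam_mem _) (sub_sdParam_mem hT)
end
end

section
/- The space of torsion tensors on ℝ⁴ of anti-Z type, i.e. satisfying Z_{ijk} = T_{ijj} + T_{ikk} + T_{jkl} = 0 for every direct ordering (i,j,k,l), is a linear subspace of dimension 12. -/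
/-!
For pairwise distinct indices `j, k, l` there is exactly one remaining index `i`, and exactly one
of `(i,j,k,l)`, `(i,k,j,l)` is a direct ordering. The corresponding equation `Z = 0` therefore
expresses `T_{jkl}` through the components `T_{ijj}`, and each of the twelve equations determines
a different one of the twelve independent components with pairwise distinct indices. Hence a
tensor of anti-`Z` type is freely determined by the twelve numbers `T_{ijj}` with `i ≠ j`:
the map `diagComp` reading them off is a linear bijection. Injectivity is
`antiZ_eq_zero`; the inverse is given by the tensor with components `coef`.
-/

noncomputable section

set_option maxSynthPendingDepth 3

/-- `(i,j,k,l)` is a direct ordering when it is an even permutation of `(0,1,2,3)`. -/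
def DirectOrdering (i j k l : Fin 4) : Prop :=
  ∃ σ : Equiv.Perm (Fin 4), Equiv.Perm.sign σ = 1 ∧ σ 0 = i ∧ σ 1 = j ∧ σ 2 = k ∧ σ 3 = l

instance (i j k l : Fin 4) : Decidable (DirectOrdering i j k l) :=
  inferInstanceAs (Decidable (∃ σ : Equiv.Perm (Fin 4),
    Equiv.Perm.sign σ = 1 ∧ σ 0 = i ∧ σ 1 = j ∧ σ 2 = k ∧ σ 3 = l))

/-- `Z_{ijk} = T_{ijj} + T_{ikk} + T_{jkl}` for a direct ordering `(i,j,k,l)`. -/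
def Zc (T : Tri 4) (i j k l : Fin 4) : ℝ :=
  T (stdB i) (stdB j) (stdB j) + T (stdB i) (stdB k) (stdB k) + T (stdB j) (stdB k) (stdB l)

/-- The space of torsion tensors of anti-`Z` type: `Z_{ijk} = 0` for every direct
ordering `(i,j,k,l)`. -/
def AntiZ : Submodule ℝ (Tri 4) where
  carrier := {T | T ∈ Torsion 4 ∧ ∀ i j k l, DirectOrdering i j k l → Zc T i j k l = 0}
  zero_mem' := ⟨(Torsion 4).zero_mem, by intro i j k l _; simp [Zc]⟩
  add_mem' := by
    rintro T S ⟨hT, hT'⟩ ⟨hS, hS'⟩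
    refine ⟨(Torsion 4).add_mem hT hS, fun i j k l h => ?_⟩
    have h1 := hT' i j k l h
    have h2 := hS' i j k l h
    simp only [Zc, LinearMap.add_apply] at h1 h2 ⊢
    linear_combination h1 + h2
  smul_mem' := by
    rintro c T ⟨hT, hT'⟩
    refine ⟨(Torsion 4).smul_mem c hT, fun i j k l h => ?_⟩
    have h1 := hT' i j k l h
    simp only [Zc, LinearMap.smul_apply, smul_eq_mul] at h1 ⊢
    linear_combination c * h1

/-- The Levi-Civita symbol on `Fin 4`, written as the Vandermonde product of the index differences
divided by its value `12` at `(0,1,2,3)`. -/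
def eps (i j k l : Fin 4) : ℤ :=
  (((j : ℕ) : ℤ) - (i : ℕ)) * (((k : ℕ) : ℤ) - (i : ℕ)) * (((l : ℕ) : ℤ) - (i : ℕ)) *
    (((k : ℕ) : ℤ) - (j : ℕ)) * (((l : ℕ) : ℤ) - (j : ℕ)) * (((l : ℕ) : ℤ) - (k : ℕ)) / 12

lemma eps_swap : ∀ i j k l : Fin 4, eps i k j l = -eps i j k l := by decide

lemma eps_self_right (i j k : Fin 4) : eps i j k k = 0 := by simp [eps]

lemma direct_spec {i j k l : Fin 4} (h : DirectOrdering i j k l) :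
    j ≠ l ∧ k ≠ l ∧ i ≠ j ∧ i ≠ k ∧ ∀ m, eps m j k l = if m = i then 1 else 0 := by
  obtain ⟨σ, hσ, rfl, rfl, rfl, rfl⟩ := h
  revert σ
  decide

lemma exists_direct : ∀ j k l : Fin 4, j ≠ k → l ≠ j → l ≠ k →
    ∃ i, i ≠ j ∧ i ≠ k ∧ (DirectOrdering i j k l ∨ DirectOrdering i k j l) := by
  decide

/-- The trilinear form with prescribed components. -/
def ofCoef (c : Fin 4 → Fin 4 → Fin 4 → ℝ) : Tri 4 :=
  ∑ i, ∑ j, ∑ k, c i j k • (LinearMap.proj i : V 4 →ₗ[ℝ] ℝ).smulRight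
    ((LinearMap.proj j : V 4 →ₗ[ℝ] ℝ).smulRight (LinearMap.proj k : V 4 →ₗ[ℝ] ℝ))

lemma ofCoef_apply (c : Fin 4 → Fin 4 → Fin 4 → ℝ) (X Y Z : V 4) :
    ofCoef c X Y Z = ∑ i, ∑ j, ∑ k, c i j k * (X i * (Y j * Z k)) := by
  simp [ofCoef, LinearMap.sum_apply]

lemma ofCoef_stdB (c : Fin 4 → Fin 4 → Fin 4 → ℝ) (i j k : Fin 4) :
    ofCoef c (stdB i) (stdB j) (stdB k) = c i j k := by
  simp [ofCoef_apply, stdB, Pi.single_apply]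

/-- The components of the anti-`Z` tensor with `T_{ijj} = a i j` for `i ≠ j`. The last term solves
`Z_{ijk} = 0` for `T_{jkl}`: only the index `i` completing `j, k, l` contributes to the sum. -/
def coef (a : Fin 4 → Fin 4 → ℝ) (j k l : Fin 4) : ℝ :=
  (if l = k then a j k else 0) - (if l = j then a k j else 0)
    - ∑ i, (eps i j k l : ℝ) * (a i j + a i k)

lemma coef_swap (a : Fin 4 → Fin 4 → ℝ) (j k l : Fin 4) : coef a j k l = -coef a k j l := by
  have h : ∑ i, (eps i k j l : ℝ) * (a i k + a i j)
      = -∑ i, (eps i j k l : ℝ) * (a i j + a i k) := by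
    rw [← Finset.sum_neg_distrib]
    refine Finset.sum_congr rfl fun i _ => ?_
    rw [eps_swap i j k l]
    push_cast
    ring
  simp only [coef, h]
  ring

lemma coef_diag (a : Fin 4 → Fin 4 → ℝ) {i j : Fin 4} (h : i ≠ j) : coef a i j j = a i j := by
  simp [coef, eps_self_right, h.symm]

lemma ofCoef_coef_mem (a : Fin 4 → Fin 4 → ℝ) : ofCoef (coef a) ∈ AntiZ := by
  refine ⟨fun X Y Z => ?_, fun i j k l h => ?_⟩
  · rw [ofCoef_apply, ofCoef_apply, Finset.sum_comm, ← Finset.sum_neg_distrib]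
    refine Finset.sum_congr rfl fun j _ => ?_
    rw [← Finset.sum_neg_distrib]
    refine Finset.sum_congr rfl fun i _ => ?_
    rw [← Finset.sum_neg_distrib]
    refine Finset.sum_congr rfl fun k _ => ?_
    rw [coef_swap a i j k]
    ring
  · obtain ⟨hjl, hkl, hij, hik, he⟩ := direct_spec h
    rw [Zc, ofCoef_stdB, ofCoef_stdB, ofCoef_stdB, coef_diag a hij, coef_diag a hik]
    simp [coef, he, hjl.symm, hkl.symm]

lemma antiZ_eq_zero {T : Tri 4} (hT : T ∈ AntiZ)
    (h0 : ∀ i j, i ≠ j → T (stdB i) (stdB j) (stdB j) = 0) : T = 0 := by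
  obtain ⟨hanti, hZ⟩ := hT
  have key : ∀ j k l, T (stdB j) (stdB k) (stdB l) = 0 := by
    intro j k l
    have hs := hanti (stdB j) (stdB k) (stdB l)
    by_cases hjk : j = k
    · subst hjk
      linarith
    by_cases hlk : l = k
    · subst hlk
      exact h0 j l hjk
    by_cases hlj : l = j
    · subst hlj
      rw [hs, h0 k l (Ne.symm hjk), neg_zero]
    obtain ⟨i, hij, hik, hd | hd⟩ := exists_direct j k l hjk hlj hlk
    · have hz := hZ _ _ _ _ hd
      rw [Zc, h0 i j hij, h0 i k hik] at hz
      linarith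
    · have hz := hZ _ _ _ _ hd
      rw [Zc, h0 i j hij, h0 i k hik] at hz
      linarith
  refine LinearMap.pi_ext' fun i => LinearMap.ext_ring ?_
  refine LinearMap.pi_ext' fun j => LinearMap.ext_ring ?_
  refine LinearMap.pi_ext' fun k => LinearMap.ext_ring ?_
  exact key i j k

/-- The linear map reading off the components `T_{ijj}`, `i ≠ j`, of an anti-`Z` tensor. -/
def diagComp : AntiZ →ₗ[ℝ] ({p : Fin 4 × Fin 4 // p.1 ≠ p.2} → ℝ) where
  toFun T p := (T : Tri 4) (stdB p.1.1) (stdB p.1.2) (stdB p.1.2)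
  map_add' _ _ := rfl
  map_smul' _ _ := rfl

lemma diagComp_bijective : Function.Bijective diagComp := by
  constructor
  · rintro ⟨S, hS⟩ ⟨T, hT⟩ h
    refine Subtype.ext (sub_eq_zero.1 (antiZ_eq_zero (AntiZ.sub_mem hS hT) fun i j hij => ?_))
    exact sub_eq_zero.2 (congrFun h ⟨(i, j), hij⟩)
  · intro b
    -- the values `a i i` never enter the components read off, so they are set to zero
    let a : Fin 4 → Fin 4 → ℝ := fun i j => if h : i ≠ j then b ⟨(i, j), h⟩ else 0
    refine ⟨⟨ofCoef (coef a), ofCoef_coef_mem a⟩, funext fun ⟨⟨i, j⟩, hij⟩ => ?_⟩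
    change ofCoef (coef a) (stdB i) (stdB j) (stdB j) = b ⟨(i, j), hij⟩
    rw [ofCoef_stdB, coef_diag a hij]
    exact dif_pos hij

/-- the space of torsion tensors on `ℝ⁴` of anti-`Z` type is a linear
subspace of dimension 12. -/
theorem antiZ_finrank : Module.finrank ℝ ↥AntiZ = 12 := by
  rw [(LinearEquiv.ofBijective diagComp diagComp_bijective).finrank_eq, Module.finrank_pi]
  decide
end
end

section
/- The forms of the gwistor structure satisfy α₁ ∧ α₂ = −(1/2) β ∧ β ∧ β = 3 e¹∧e²∧e³∧e⁴∧e⁵∧e⁶. -/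
/-!
The 1-forms `e i` square to zero and anticommute, so every monomial in them is either zero
(a repeated factor) or `±` the monomial with increasing indices. Read as rewrite rules from left to
right, `e_mul_self`, `e_swap` and their versions for right-nested products sort every monomial, which
reduces `α₁ * α₂` to `3 e¹²³⁴⁵⁶` and `β * β * β` to `-6 e¹²³⁴⁵⁶`.
-/

noncomputable section

open ExteriorAlgebra

/-- The exterior algebra of forms generated by the standard (dual) basis of `ℝ⁷`. -/
abbrev Ext7 := ExteriorAlgebra ℝ (Fin 7 → ℝ)

/-- The basis 1-forms `e⁰, …, e⁶`. -/
def e (i : Fin 7) : Ext7 := ι ℝ (Pi.single i 1)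

/-- The 1-form `μ = e⁰`. -/
def μ : Ext7 := e 0

/-- The 2-form `β = e¹∧e⁴ + e²∧e⁵ + e³∧e⁶`. -/
def β : Ext7 := e 1 * e 4 + e 2 * e 5 + e 3 * e 6

/-- The 3-form `α = e⁴∧e⁵∧e⁶`. -/
def α : Ext7 := e 4 * e 5 * e 6

/-- The 3-form `α₁ = e¹∧e⁵∧e⁶ + e²∧e⁶∧e⁴ + e³∧e⁴∧e⁵`. -/
def α₁ : Ext7 := e 1 * e 5 * e 6 + e 2 * e 6 * e 4 + e 3 * e 4 * e 5

/-- The 3-form `α₂ = e¹∧e²∧e⁶ + e²∧e³∧e⁴ + e³∧e¹∧e⁵`. -/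
def α₂ : Ext7 := e 1 * e 2 * e 6 + e 2 * e 3 * e 4 + e 3 * e 1 * e 5

/-- The `G₂` 3-form `φ = α + μ∧β − α₂` of gwistor space. -/
def φ : Ext7 := α + μ * β - α₂

/-- The 4-form `Φ = e⁰∧e¹∧e²∧e³ − (1/2)β∧β − μ∧α₁`, the Hodge dual of `φ`. -/
def Φ : Ext7 := e 0 * e 1 * e 2 * e 3 - (1/2 : ℝ) • (β * β) - μ * α₁

/-- The volume form `Vol = e⁰∧e¹∧e²∧e³∧e⁴∧e⁵∧e⁶`. -/
def Vol : Ext7 := e 0 * e 1 * e 2 * e 3 * e 4 * e 5 * e 6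

lemma e_mul_self (i : Fin 7) : e i * e i = 0 := ι_sq_zero _

lemma e_mul_self_assoc (i : Fin 7) (x : Ext7) : e i * (e i * x) = 0 := by
  rw [← mul_assoc, e_mul_self, zero_mul]

/-- Anticommutativity, oriented towards increasing indices by `i < j` so that rewriting with it
terminates. -/
lemma e_swap {i j : Fin 7} (_h : i < j) : e j * e i = -(e i * e j) :=
  eq_neg_of_add_eq_zero_left (ι_add_mul_swap _ _)

lemma e_swap_assoc {i j : Fin 7} (h : i < j) (x : Ext7) :
    e j * (e i * x) = -(e i * (e j * x)) := by
  rw [← mul_assoc, e_swap h, neg_mul, mul_assoc]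

lemma alpha1_mul_alpha2_eq :
    α₁ * α₂ = (3 : ℝ) • (e 1 * e 2 * e 3 * e 4 * e 5 * e 6) := by
  simp (discharger := decide) only [α₁, α₂, mul_add, add_mul, mul_assoc, e_mul_self,
    e_mul_self_assoc, e_swap, e_swap_assoc, mul_neg, neg_mul, neg_neg, mul_zero,
    neg_zero, add_zero, zero_add]
  module

lemma beta_cubed_eq :
    β * β * β = (-6 : ℝ) • (e 1 * e 2 * e 3 * e 4 * e 5 * e 6) := by
  simp (discharger := decide) only [β, mul_add, add_mul, mul_assoc, e_mul_self,
    e_mul_self_assoc, e_swap, e_swap_assoc, mul_neg, neg_mul, neg_neg, mul_zero,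
    neg_zero, add_zero, zero_add]
  module

/-- `α₁ ∧ α₂ = −(1/2) β ∧ β ∧ β = 3 e¹∧e²∧e³∧e⁴∧e⁵∧e⁶`. -/
theorem alpha1_wedge_alpha2 :
    α₁ * α₂ = (-(1/2) : ℝ) • (β * β * β) ∧
    α₁ * α₂ = (3 : ℝ) • (e 1 * e 2 * e 3 * e 4 * e 5 * e 6) := by
  refine ⟨?_, alpha1_mul_alpha2_eq⟩
  rw [alpha1_mul_alpha2_eq, beta_cubed_eq, smul_smul]
  norm_num
end
end
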